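/- For every integer n ≥ 1, the all-mountain MV assignment M^n on the 1×(n+1) strip of stamps satisfies c(M^n) = n, and likewise the all-valley assignment satisfies c(V^n) = n. -/

import Mathlib

/-- A crease direction: mountain or valley. -/
inductive MV : Type
  | M : MV
  | V : MV
deriving DecidableEq

/-- The value `σ(i)` of a layer ordering at face `i`, as a natural number
(`0` if `i` is out of range). -/
def faceVal {n : ℕ} (σ : Equiv.Perm (Fin n)) (i : ℕ) : ℕ :=
  if h : i < n then (σ ⟨i, h⟩ : Fin n) else 0

/-- Condition (1): the layer ordering respects the mountain–valley assignment. -/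
def MVRelations (n : ℕ) (μ : ℕ → MV) (σ : Equiv.Perm (Fin n)) : Prop :=
  ∀ i, i + 1 < n →
    if (μ i = MV.M ∧ Even i) ∨ (μ i = MV.V ∧ Odd i)
    then faceVal σ (i + 1) < faceVal σ i
    else faceVal σ i < faceVal σ (i + 1)

/-- `x` lies strictly between `lo` and `hi` (in either order). -/
def StrictlyBetween (x a b : ℕ) : Prop := min a b < x ∧ x < max a b

/-- Condition (2): no two creases on the same side cross. -/
def NoCrossings (n : ℕ) (σ : Equiv.Perm (Fin n)) : Prop :=
  ∀ i j, i + 1 < n → j + 1 < n → i % 2 = j % 2 →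
    ¬ Xor' (StrictlyBetween (faceVal σ j) (faceVal σ i) (faceVal σ (i + 1)))
           (StrictlyBetween (faceVal σ (j + 1)) (faceVal σ i) (faceVal σ (i + 1)))

/-- A valid layer ordering for the MV assignment `μ` on the `1 × n` strip. -/
def ValidLayerOrdering (n : ℕ) (μ : ℕ → MV) (σ : Equiv.Perm (Fin n)) : Prop :=
  MVRelations n μ σ ∧ NoCrossings n σ

/-- `c(μ)`: the number of valid layer orderings for `μ` on the `1 × n` strip. -/
noncomputable def foldCount (n : ℕ) (μ : ℕ → MV) : ℕ :=
  Nat.card {σ : Equiv.Perm (Fin n) // ValidLayerOrdering n μ σ}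

/-- Abstract zigzag non-crossing function. -/
structure Zig (N p : ℕ) (f : ℕ → ℤ) : Prop where
  up : ∀ j, j + 1 < N → (j + p) % 2 = 0 → f j < f (j + 1)
  down : ∀ j, j + 1 < N → (j + p) % 2 = 1 → f (j + 1) < f j
  inj : ∀ j k, j < N → k < N → f j = f k → j = k
  nc : ∀ i j, i + 1 < N → j + 1 < N → i % 2 = j % 2 →
    ((min (f i) (f (i+1)) < f j ∧ f j < max (f i) (f (i+1))) ↔
     (min (f i) (f (i+1)) < f (j+1) ∧ f (j+1) < max (f i) (f (i+1))))

theorem Zig.neg {N p : ℕ} {f : ℕ → ℤ} (h : Zig N p f) : Zig N (p + 1) (fun j => - f j) where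
  up j hj hp := by have := h.down j hj (by omega); (try simp only); omega
  down j hj hp := by have := h.up j hj (by omega); (try simp only); omega
  inj j k hj hk e := h.inj j k hj hk (by (try simp only at e); omega)
  nc i j hi hj e := by have := h.nc i j hi hj e; (try simp only); omega

theorem Zig.trap {N p : ℕ} {f : ℕ → ℤ} (h : Zig N p f) (i : ℕ) (hp : (i + p) % 2 = 0)
    (hi : i + 2 < N) (hlt : f i < f (i + 2)) :
    ∀ j, i + 2 ≤ j → j < N → f (i + 2) ≤ f j ∧ f j < f (i + 1) := by
  intro j hj
  induction j, hj using Nat.le_induction with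
  | base => intro _; exact ⟨le_rfl, h.down (i+1) hi (by omega)⟩
  | succ j hj ih =>
    intro hjN
    have ih := ih (by omega)
    have h1 := h.up i (by omega) hp
    have h2 := h.down (i+1) hi (by omega)
    rcases Nat.mod_two_eq_zero_or_one (j + p) with hc | hc
    · have a1 := h.up j hjN hc
      have a2 := h.nc i j (by omega) hjN (by omega)
      omega
    · have a1 := h.down j hjN hc
      have a2 := h.nc (i+1) j (by omega) hjN (by omega)
      have a3 : f j ≠ f (i + 2) := fun e => by
        have := h.inj _ _ (by omega) (by omega) e
        omega
      try simp only [show i + 1 + 1 = i + 2 from rfl] at *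
      omega

theorem Zig.excl {N p : ℕ} {f : ℕ → ℤ} (h : Zig N p f) (i : ℕ) (hp : (i + p) % 2 = 0)
    (hi : i + 2 < N) (hlt : f (i + 2) < f i) (b : ℤ) (hb : f i ≤ b)
    (hno : ∀ j, i < j → j < N → f j < f i ∨ b < f j) :
    ∀ j, i + 2 ≤ j → j < N → ¬ (b < f j ∧ f j < f (i + 1)) := by
  intro j hj
  induction j, hj using Nat.le_induction with
  | base => intro _; omega
  | succ j hj ih =>
    intro hjN
    have ih := ih (by omega)
    have h1 := h.up i (by omega) hp
    have h2 := h.down (i+1) hi (by omega)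
    have h3 := hno j (by omega) (by omega)
    rcases Nat.mod_two_eq_zero_or_one (j + p) with hc | hc
    · have a1 := h.up j hjN hc
      have a2 := h.nc i j (by omega) hjN (by omega)
      omega
    · have a1 := h.down j hjN hc
      have a2 := h.nc (i+1) j (by omega) hjN (by omega)
      try simp only [show i + 1 + 1 = i + 2 from rfl] at *
      omega

theorem Zig.stepA {N p : ℕ} {f : ℕ → ℤ} (h : Zig N p f) (i : ℕ) (hp : (i + p) % 2 = 0)
    (hi : i + 1 < N) (b : ℤ) (hb : f i ≤ b)
    (hno : ∀ j, i < j → j < N → f j < f i ∨ b < f j)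
    (hex : ∃ k, i < k ∧ k < N ∧ f k < f i) :
    b < f (i + 1) ∧ ∀ j, i < j → j < N → ¬ (b < f j ∧ f j < f (i + 1)) := by
  obtain ⟨k, hk1, hk2, hk3⟩ := hex
  have h1 := h.up i hi hp
  have h2 := hno (i+1) (by omega) hi
  refine ⟨by omega, fun j hj hjN => ?_⟩
  have hk4 : k ≠ i + 1 := by rintro rfl; omega
  by_cases e : j = i + 1
  · subst e; omega
  have hiN : i + 2 < N := by omega
  have h3 : f i ≠ f (i+2) := fun e => by
    have := h.inj _ _ (by omega) (by omega) e
    omega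
  rcases lt_or_gt_of_ne h3 with h4 | h4
  · have := h.trap i hp hiN h4 k (by omega) hk2
    omega
  · exact h.excl i hp hiN h4 b hb hno j (by omega) hjN

theorem Zig.stepB {N p : ℕ} {f : ℕ → ℤ} (h : Zig N p f) (i : ℕ) (hp : (i + p) % 2 = 0)
    (hno : ∀ j, i < j → j < N → f i < f j) :
    ∀ j, i < j → j < N → f j ≤ f (i + 1) := by
  intro j hj hjN
  by_cases e : j = i + 1
  · subst e; exact le_rfl
  · exact (h.trap i hp (by omega) (hno _ (by omega) (by omega)) j (by omega) hjN).2.le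

/-- The explicit layer ordering starting with `σ(0) = a`. -/
def spiral (N a i : ℕ) : ℕ :=
  if 2 * a ≤ N then
    if i < 2 * a then (if i % 2 = 0 then a + i / 2 else a - 1 - i / 2)
    else (if i % 2 = 0 then N - 1 + a - i / 2 else a + i / 2)
  else
    if i + 1 < 2 * (N - a) then (if i % 2 = 0 then a + i / 2 else a - 1 - i / 2)
    else (if i % 2 = 0 then a - i / 2 else i / 2 + 1 + a - N)

theorem spiral_lt {N a i : ℕ} (h1 : 1 ≤ a) (h2 : a < N) (hi : i < N) : spiral N a i < N := by
  unfold spiral; split_ifs <;> omega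

theorem spiral_inj {N a i j : ℕ} (h1 : 1 ≤ a) (h2 : a < N) (hi : i < N) (hj : j < N)
    (h : spiral N a i = spiral N a j) : i = j := by
  unfold spiral at h; split_ifs at h <;> omega

theorem spiral_zero {N a : ℕ} (h1 : 1 ≤ a) (h2 : a < N) : spiral N a 0 = a := by
  unfold spiral; split_ifs <;> omega

noncomputable def spiralPerm (N a : ℕ) (h1 : 1 ≤ a) (h2 : a < N) : Equiv.Perm (Fin N) :=
  Equiv.ofBijective (fun i => ⟨spiral N a i, spiral_lt h1 h2 i.2⟩)
    (Finite.injective_iff_bijective.1 (fun i j h => by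
      apply Fin.ext
      exact spiral_inj h1 h2 i.2 j.2 (by simpa using h)))

theorem faceVal_spiralPerm {N a i : ℕ} (h1 : 1 ≤ a) (h2 : a < N) (hi : i < N) :
    faceVal (spiralPerm N a h1 h2) i = spiral N a i := by
  simp [faceVal, hi, spiralPerm]

theorem spiral_surj {N a p : ℕ} (h1 : 1 ≤ a) (h2 : a < N) (hp : p < N) :
    ∃ i, i < N ∧ spiral N a i = p := by
  obtain ⟨i, hi⟩ := (spiralPerm N a h1 h2).surjective ⟨p, hp⟩
  refine ⟨i, i.2, ?_⟩
  simpa [spiralPerm] using congrArg Fin.val hi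

theorem faceVal_lt {N : ℕ} (σ : Equiv.Perm (Fin N)) {i : ℕ} (hi : i < N) : faceVal σ i < N := by
  simp [faceVal, hi]

theorem faceVal_inj {N : ℕ} (σ : Equiv.Perm (Fin N)) {i j : ℕ} (hi : i < N) (hj : j < N)
    (h : faceVal σ i = faceVal σ j) : i = j := by
  simp only [faceVal, hi, hj, dite_true] at h
  simpa using σ.injective (Fin.ext h)

theorem faceVal_surj {N : ℕ} (σ : Equiv.Perm (Fin N)) {p : ℕ} (hp : p < N) :
    ∃ i, i < N ∧ faceVal σ i = p := by
  obtain ⟨i, hi⟩ := σ.surjective ⟨p, hp⟩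
  exact ⟨i, i.2, by simp [faceVal, hi]⟩

theorem valid_iff_M {N : ℕ} (σ : Equiv.Perm (Fin N)) :
    ValidLayerOrdering N (fun _ => MV.M) σ ↔ Zig N 1 (fun i => (faceVal σ i : ℤ)) := by
  constructor
  · rintro ⟨h1, h2⟩
    refine ⟨fun j hj hp => ?_, fun j hj hp => ?_, fun j k hj hk e => ?_, fun i j hi hj e => ?_⟩
    · have := h1 j hj
      rw [if_neg (by simp [Nat.even_iff]; omega)] at this
      exact_mod_cast this
    · have := h1 j hj
      rw [if_pos (by simp [Nat.even_iff]; omega)] at this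
      exact_mod_cast this
    · exact faceVal_inj σ hj hk (by exact_mod_cast e)
    · have := h2 i j hi hj e
      replace this := (not_xor _ _).1 this
      simp only [StrictlyBetween] at this
      omega
  · intro h
    refine ⟨fun i hi => ?_, fun i j hi hj e => ?_⟩
    · rcases Nat.mod_two_eq_zero_or_one i with hc | hc
      · have := h.down i hi (by omega)
        rw [if_pos (by simp [Nat.even_iff]; omega)]
        exact_mod_cast this
      · have := h.up i hi (by omega)
        rw [if_neg (by simp [Nat.even_iff]; omega)]
        exact_mod_cast this
    · have := h.nc i j hi hj e
      refine (not_xor _ _).2 ?_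
      simp only [StrictlyBetween]
      omega

theorem spiral_updown {N a i : ℕ} (h1 : 1 ≤ a) (h2 : a < N) (hi : i + 1 < N) :
    if i % 2 = 0 then spiral N a (i+1) < spiral N a i else spiral N a i < spiral N a (i+1) := by
  unfold spiral; split_ifs <;> omega

theorem spiral_nc {N a i j : ℕ} (h1 : 1 ≤ a) (h2 : a < N) (hi : i + 1 < N) (hj : j + 1 < N)
    (e : i % 2 = j % 2) :
    ((min (spiral N a i) (spiral N a (i+1)) < spiral N a j ∧
      spiral N a j < max (spiral N a i) (spiral N a (i+1))) ↔
     (min (spiral N a i) (spiral N a (i+1)) < spiral N a (j+1) ∧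
      spiral N a (j+1) < max (spiral N a i) (spiral N a (i+1)))) := by
  have ci := spiral_updown h1 h2 hi
  rcases Nat.mod_two_eq_zero_or_one i with hc | hc
  · have hd : j % 2 = 0 := by omega
    have hc1 : ¬ (i + 1) % 2 = 0 := by omega
    have hd1 : ¬ (j + 1) % 2 = 0 := by omega
    rw [if_pos hc] at ci
    rw [min_eq_right ci.le, max_eq_left ci.le]
    clear ci
    obtain ⟨k, rfl⟩ : ∃ k, i = 2 * k := ⟨i / 2, by omega⟩
    obtain ⟨l, rfl⟩ : ∃ l, j = 2 * l := ⟨j / 2, by omega⟩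
    simp only [spiral, hc, hd, hc1, hd1, if_true, if_false,
      show (2 * k + 1) / 2 = k by omega, show (2 * l + 1) / 2 = l by omega,
      show (2 * k) / 2 = k by omega, show (2 * l) / 2 = l by omega]
    split_ifs <;> omega
  · have hc0 : ¬ i % 2 = 0 := by omega
    have hd : ¬ j % 2 = 0 := by omega
    have hc1 : (i + 1) % 2 = 0 := by omega
    have hd1 : (j + 1) % 2 = 0 := by omega
    rw [if_neg hc0] at ci
    rw [min_eq_left ci.le, max_eq_right ci.le]
    clear ci
    obtain ⟨k, rfl⟩ : ∃ k, i = 2 * k + 1 := ⟨i / 2, by omega⟩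
    obtain ⟨l, rfl⟩ : ∃ l, j = 2 * l + 1 := ⟨j / 2, by omega⟩
    simp only [spiral, hc0, hd, hc1, hd1, if_true, if_false,
      show (2 * k + 1) / 2 = k by omega, show (2 * l + 1) / 2 = l by omega,
      show (2 * k + 1 + 1) / 2 = k + 1 by omega, show (2 * l + 1 + 1) / 2 = l + 1 by omega]
    split_ifs <;> omega

theorem spiralPerm_valid {N a : ℕ} (h1 : 1 ≤ a) (h2 : a < N) :
    ValidLayerOrdering N (fun _ => MV.M) (spiralPerm N a h1 h2) := by
  rw [valid_iff_M]
  refine ⟨fun j hj hp => ?_, fun j hj hp => ?_, fun j k hj hk e => ?_, fun i j hi hj e => ?_⟩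
  · have := spiral_updown h1 h2 hj
    rw [if_neg (by omega)] at this
    simp only [faceVal_spiralPerm h1 h2 hj, faceVal_spiralPerm h1 h2 (show j < N by omega)]
    omega
  · have := spiral_updown h1 h2 hj
    rw [if_pos (by omega)] at this
    simp only [faceVal_spiralPerm h1 h2 hj, faceVal_spiralPerm h1 h2 (show j < N by omega)]
    omega
  · exact faceVal_inj _ hj hk (by exact_mod_cast e)
  · have := spiral_nc h1 h2 hi hj e
    simp only [faceVal_spiralPerm h1 h2 hj, faceVal_spiralPerm h1 h2 (show j < N by omega),
      faceVal_spiralPerm h1 h2 hi, faceVal_spiralPerm h1 h2 (show i < N by omega)]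
    omega

/-- `i + 1` belongs to the outward phase. -/
def Outw (N a i : ℕ) : Prop := if 2 * a ≤ N then i < 2 * a else i + 1 < 2 * (N - a)

theorem unique_M {N : ℕ} (σ : Equiv.Perm (Fin N))
    (h : ValidLayerOrdering N (fun _ => MV.M) σ) (h1 : 1 ≤ faceVal σ 0) (h2 : faceVal σ 0 < N) :
    ∀ i, i < N → faceVal σ i = spiral N (faceVal σ 0) i := by
  rw [valid_iff_M] at h
  generalize ha : faceVal σ 0 = a at *
  intro i
  induction i using Nat.strong_induction_on with
  | _ i ih =>
  intro hi
  rcases i with _ | i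
  · rw [ha, spiral_zero h1 h2]
  have L1 : ∀ k, i < k → k < N → ∃ j, i < j ∧ j < N ∧ faceVal σ k = spiral N a j := by
    intro k hk hkN
    obtain ⟨j, hj, e⟩ := spiral_surj h1 h2 (faceVal_lt σ hkN)
    refine ⟨j, ?_, hj, e.symm⟩
    by_contra hc
    have := ih j (by omega) hj
    have := faceVal_inj σ hkN hj (by omega)
    omega
  have L2 : ∀ j, i < j → j < N → ∃ k, i < k ∧ k < N ∧ faceVal σ k = spiral N a j := by
    intro j hj hjN
    obtain ⟨k, hk, e⟩ := faceVal_surj σ (spiral_lt h1 h2 hjN)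
    refine ⟨k, ?_, hk, e⟩
    by_contra hc
    have := ih k (by omega) hk
    have := spiral_inj h1 h2 hk hjN (by omega)
    omega
  have fi := ih i (by omega) (by omega)
  clear ih
  obtain ⟨k, hk, hkN, ek⟩ := L2 (i+1) (by omega) hi
  obtain ⟨m, hm, hmN, em⟩ := L1 (i+1) (by omega) hi
  by_cases hlast : i + 2 = N
  · obtain rfl : k = i + 1 := by omega
    exact ek
  by_cases ho : Outw N a (i + 1)
  · have hex : ∃ q, i < q ∧ q < N ∧
        (if i % 2 = 0 then faceVal σ i < faceVal σ q else faceVal σ q < faceVal σ i) := by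
      have : i + 2 < N ∧ (if i % 2 = 0 then spiral N a i < spiral N a (i+2) else
          spiral N a (i+2) < spiral N a i) := by
        refine ⟨by omega, ?_⟩
        unfold Outw at ho; unfold spiral
        split_ifs at ho ⊢ <;> omega
      obtain ⟨q, hq, hqN, eq⟩ := L2 (i+2) (by omega) this.1
      exact ⟨q, hq, hqN, by rw [eq, fi]; exact this.2⟩
    rcases Nat.mod_two_eq_zero_or_one i with hc | hc
    · have hno : ∀ j, i < j → j < N →
          faceVal σ i < faceVal σ j ∨ faceVal σ j ≤ spiral N a (i+1) := by
        intro j hj hjN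
        obtain ⟨q, hq, hqN, eq⟩ := L1 j hj hjN
        rw [eq, fi]
        clear eq em ek fi hex L1 L2
        unfold Outw at ho; unfold spiral
        split_ifs at ho ⊢ <;> omega
      have hud := spiral_updown h1 h2 hi
      rw [if_pos hc] at hud
      obtain ⟨q, hq, hqN, eq⟩ := hex
      rw [if_pos hc] at eq
      have := h.neg.stepA i (by omega) hi (-(spiral N a (i+1) : ℤ) - 1) (by (try simp only); omega)
        (fun j hj hjN => by have := hno j hj hjN; (try simp only); omega) ⟨q, hq, hqN, by (try simp only); omega⟩
      have t := this.2 k hk hkN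
      have t1 := this.1
      simp only [ek] at t t1
      omega
    · have hno : ∀ j, i < j → j < N →
          faceVal σ j < faceVal σ i ∨ spiral N a (i+1) ≤ faceVal σ j := by
        intro j hj hjN
        obtain ⟨q, hq, hqN, eq⟩ := L1 j hj hjN
        rw [eq, fi]
        clear eq em ek fi hex L1 L2
        unfold Outw at ho; unfold spiral
        split_ifs at ho ⊢ <;> omega
      have hud := spiral_updown h1 h2 hi
      rw [if_neg (by omega)] at hud
      obtain ⟨q, hq, hqN, eq⟩ := hex
      rw [if_neg (by omega)] at eq
      have := h.stepA i (by omega) hi ((spiral N a (i+1) : ℤ) - 1) (by (try simp only); omega)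
        (fun j hj hjN => by have := hno j hj hjN; (try simp only); omega) ⟨q, hq, hqN, by (try simp only); omega⟩
      have t := this.2 k hk hkN
      have t1 := this.1
      simp only [ek] at t t1
      omega
  · rcases Nat.mod_two_eq_zero_or_one i with hc | hc
    · have hno : ∀ j, i < j → j < N → faceVal σ j < faceVal σ i := by
        intro j hj hjN
        obtain ⟨q, hq, hqN, eq⟩ := L1 j hj hjN
        rw [eq, fi]
        clear eq em ek fi L1 L2
        unfold Outw at ho; unfold spiral
        split_ifs at ho ⊢ <;> omega
      have t := h.neg.stepB i (by omega) (fun j hj hjN => by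
        have := hno j hj hjN; (try simp only); omega) k hk hkN
      have : spiral N a (i+1) ≤ spiral N a m := by
        clear em ek fi L1 L2 hno t
        unfold Outw at ho; unfold spiral
        split_ifs at ho ⊢ <;> omega
      try simp only at t
      omega
    · have hno : ∀ j, i < j → j < N → faceVal σ i < faceVal σ j := by
        intro j hj hjN
        obtain ⟨q, hq, hqN, eq⟩ := L1 j hj hjN
        rw [eq, fi]
        clear eq em ek fi L1 L2
        unfold Outw at ho; unfold spiral
        split_ifs at ho ⊢ <;> omega
      have t := h.stepB i (by omega) (fun j hj hjN => by
        have := hno j hj hjN; (try simp only); omega) k hk hkN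
      have : spiral N a m ≤ spiral N a (i+1) := by
        clear em ek fi L1 L2 hno t
        unfold Outw at ho; unfold spiral
        split_ifs at ho ⊢ <;> omega
      try simp only at t
      omega

theorem count_M (n : ℕ) (hn : 1 ≤ n) : foldCount (n + 1) (fun _ => MV.M) = n := by
  unfold foldCount
  let g : Fin n → {σ : Equiv.Perm (Fin (n+1)) // ValidLayerOrdering (n+1) (fun _ => MV.M) σ} :=
    fun a => ⟨spiralPerm (n+1) (a+1) (by omega) (by omega), spiralPerm_valid _ _⟩
  have hg : Function.Bijective g := by
    constructor
    · intro a b e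
      have e1 := congrArg (fun s => faceVal s.1 0) e
      simp only [g] at e1
      rw [faceVal_spiralPerm _ _ (by omega), faceVal_spiralPerm _ _ (by omega),
        spiral_zero (by omega) (by omega), spiral_zero (by omega) (by omega)] at e1
      exact Fin.ext (by omega)
    · rintro ⟨σ, hσ⟩
      have h2 := faceVal_lt σ (show 0 < n + 1 by omega)
      have h1 : 1 ≤ faceVal σ 0 := by
        have := hσ.1 0 (by omega)
        simp at this
        omega
      refine ⟨⟨faceVal σ 0 - 1, by omega⟩, ?_⟩
      apply Subtype.ext
      apply Equiv.ext
      intro x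
      have u := unique_M σ hσ h1 h2 x x.2
      apply Fin.ext
      have e : faceVal σ 0 - 1 + 1 = faceVal σ 0 := by omega
      have v : faceVal σ x = (σ x : ℕ) := by simp only [faceVal, x.2, dite_true]
      simp only [g, spiralPerm, Equiv.ofBijective_apply, e]
      omega
  rw [← Nat.card_congr (Equiv.ofBijective g hg)]
  simp

theorem faceVal_rev {N : ℕ} (σ : Equiv.Perm (Fin N)) {i : ℕ} (hi : i < N) :
    faceVal (σ.trans Fin.revPerm) i + faceVal σ i + 1 = N := by
  simp only [faceVal, hi, dite_true, Equiv.trans_apply, Fin.revPerm_apply, Fin.val_rev]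
  omega

theorem valid_rev {N : ℕ} (σ : Equiv.Perm (Fin N)) :
    ValidLayerOrdering N (fun _ => MV.V) σ ↔
      ValidLayerOrdering N (fun _ => MV.M) (σ.trans Fin.revPerm) := by
  unfold ValidLayerOrdering
  apply and_congr
  · unfold MVRelations
    refine forall_congr' fun i => forall_congr' fun hi => ?_
    have a := faceVal_rev σ hi
    have b := faceVal_rev σ (show i < N by omega)
    simp only [reduceCtorEq, false_and, true_and, false_or, or_false, Nat.even_iff, Nat.odd_iff]
    split_ifs <;> omega
  · unfold NoCrossings
    refine forall_congr' fun i => forall_congr' fun j => forall_congr' fun hi =>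
      forall_congr' fun hj => forall_congr' fun _ => ?_
    have a := faceVal_rev σ hi
    have b := faceVal_rev σ (show i < N by omega)
    have c := faceVal_rev σ hj
    have d := faceVal_rev σ (show j < N by omega)
    have e1 : ∀ x x' y y' z z' : ℕ, x' + x + 1 = N → y' + y + 1 = N → z' + z + 1 = N →
        (StrictlyBetween x y z ↔ StrictlyBetween x' y' z') := by
      intros; unfold StrictlyBetween; omega
    rw [e1 _ _ _ _ _ _ d b a, e1 _ _ _ _ _ _ c b a]

theorem count_V (N : ℕ) : foldCount N (fun _ => MV.V) = foldCount N (fun _ => MV.M) := by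
  unfold foldCount
  refine Nat.card_congr (Equiv.subtypeEquiv
    ⟨fun σ => σ.trans Fin.revPerm, fun σ => σ.trans Fin.revPerm, ?_, ?_⟩ ?_)
  · intro σ; ext x; simp
  · intro σ; ext x; simp
  · intro σ; exact valid_rev σ

/-- Theorem: for every `n ≥ 1`, the all-mountain assignment `M^n` and the all-valley
assignment `V^n` on the `1 × (n+1)` strip each fold in exactly `n` ways. -/
theorem stmt0 (n : ℕ) (hn : 1 ≤ n) :
    foldCount (n + 1) (fun _ => MV.M) = n ∧ foldCount (n + 1) (fun _ => MV.V) = n := by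
  exact ⟨count_M n hn, (count_V _).trans (count_M n hn)⟩
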